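/- arXiv:2410.07478 — 2 statements merged into one kernel-verified Lean document; each statement's English description precedes it below -/
import Mathlib

section
/- If f : U → ℂ is holomorphic on an open set U ⊆ ℂ^ℓ and vanishes on the set where any two coordinates coincide, then there exists a unique holomorphic g : U → ℂ with f = g · Δ, where Δ is the Vandermonde determinant. -/
/-- The Vandermonde polynomial `Δ_n(μ) = ∏_{i<j} (μ j - μ i)` as a function. -/
noncomputable def vdet {n : ℕ} (z : Fin n → ℂ) : ℂ :=
  ∏ p ∈ Finset.univ.filter (fun p : Fin n × Fin n => p.1 < p.2), (z p.2 - z p.1)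

/-!
Divide by one linear factor `L` at a time. If a holomorphic `g` vanishes on `ker L`, then on every
line transverse to `ker L` the singularity of `g / L` is removable, so near `ker L` the quotient is
its own average over circles in a transverse direction. These circles avoid `ker L`, hence the
average depends holomorphically on its centre. The induction continues because the quotient by the
factors already treated vanishes on a dense part of the next hyperplane, the part avoiding the
other hyperplanes.
-/

open Filter Metric Set Topology

section HolomorphicC1

variable {E F : Type*} [NormedAddCommGroup E] [NormedSpace ℂ E]
  [NormedAddCommGroup F] [NormedSpace ℂ F] {f : E → F} {U : Set E} {a : E}

lemma norm_fderiv_le_of_forall_mem_ball_norm_le {C r : ℝ} (hr : 0 < r)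
    (hf : DifferentiableOn ℂ f (ball a r)) (hC : ∀ y ∈ ball a r, ‖f y‖ ≤ C) :
    ‖fderiv ℂ f a‖ ≤ 2 * C / r := by
  refine Complex.norm_fderiv_le_div_of_mapsTo_ball hf (fun y hy => ?_) hr
  rw [mem_closedBall, dist_eq_norm]
  linarith [norm_sub_le (f y) (f a), hC y hy, hC a (mem_ball_self hr)]

lemma exists_lipschitzOnWith_of_differentiableOn (hU : IsOpen U) (hf : DifferentiableOn ℂ f U)
    (ha : a ∈ U) : ∃ C, ∃ t ∈ 𝓝 a, LipschitzOnWith C f t := by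
  have hnear : ∀ᶠ x in 𝓝 a, x ∈ U ∧ f x ∈ ball (f a) 1 :=
    (hU.eventually_mem ha).and
      ((hf.continuousOn.continuousAt (hU.mem_nhds ha)).eventually_mem (ball_mem_nhds _ one_pos))
  obtain ⟨R, hR, hball⟩ := eventually_nhds_iff_ball.1 hnear
  have hsub {y : E} (hy : y ∈ ball a (R / 4)) : ball y (R / 2) ⊆ ball a R :=
    ball_subset_ball' (by linarith [mem_ball.1 hy])
  refine ⟨_, ball a (R / 4), ball_mem_nhds a (by positivity),
    LipschitzOnWith.of_dist_le' (K := 2 / (R / 2)) fun x hx y hy => ?_⟩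
  refine Complex.dist_le_div_mul_dist_of_mapsTo_ball
    (hf.mono fun z hz => (hball z (hsub hy hz)).1) (fun z hz => ?_) ?_
  · have hfz := mem_ball.1 (hball z (hsub hy hz)).2
    have hfy := mem_ball.1 (hball y (ball_subset_ball (by linarith) hy)).2
    exact mem_closedBall.2 (by linarith [dist_triangle_right (f z) (f y) (f a)])
  · exact mem_ball.2 (by linarith [dist_triangle_right x y a, mem_ball.1 hx, mem_ball.1 hy])

lemma norm_fderiv_sub_fderiv_le_of_lipschitzOnWith {C : NNReal} {r : ℝ}
    (hf : DifferentiableOn ℂ f (ball a r)) (hC : LipschitzOnWith C f (ball a r)) {x : E}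
    (hx : x ∈ ball a (r / 2)) :
    ‖fderiv ℂ f x - fderiv ℂ f a‖ ≤ 2 * (C * ‖x - a‖) / (r / 2) := by
  have hr : 0 < r / 2 := pos_of_mem_ball hx
  have hr2 : ball a (r / 2) ⊆ ball a r := ball_subset_ball (by linarith)
  have hd {y : E} (hy : y ∈ ball a r) : DifferentiableAt ℂ f y :=
    hf.differentiableAt (isOpen_ball.mem_nhds hy)
  have hshift {y : E} (hy : y ∈ ball a (r / 2)) : y + (x - a) ∈ ball a r := by
    rw [mem_ball_iff_norm] at hx hy ⊢
    calc ‖y + (x - a) - a‖ = ‖(y - a) + (x - a)‖ := by congr 1; abel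
      _ ≤ ‖y - a‖ + ‖x - a‖ := norm_add_le _ _
      _ < r := by linarith
  have hd_shift {y : E} (hy : y ∈ ball a (r / 2)) :
      DifferentiableAt ℂ (fun y => f (y + (x - a))) y :=
    (differentiableAt_comp_add_right _).2 (hd (hshift hy))
  have ha : a ∈ ball a (r / 2) := mem_ball_self hr
  -- Cauchy's estimate for the increment `y ↦ f (y + (x - a)) - f y`, which is `O(‖x - a‖)`.
  have hderiv : fderiv ℂ (fun y => f (y + (x - a)) - f y) a = fderiv ℂ f x - fderiv ℂ f a := by
    rw [fderiv_fun_sub (hd_shift ha) (hd (hr2 ha)), fderiv_comp_add_right, add_sub_cancel]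
  rw [← hderiv]
  refine norm_fderiv_le_of_forall_mem_ball_norm_le hr
    (fun y hy => ((hd_shift hy).sub (hd (hr2 hy))).differentiableWithinAt) fun y hy => ?_
  simpa [dist_eq_norm] using hC.dist_le_mul _ (hshift hy) y (hr2 hy)

lemma continuousOn_fderiv_of_differentiableOn (hU : IsOpen U) (hf : DifferentiableOn ℂ f U) :
    ContinuousOn (fderiv ℂ f) U := by
  intro a ha
  obtain ⟨C, t, ht, hC⟩ := exists_lipschitzOnWith_of_differentiableOn hU hf ha
  obtain ⟨r, hr, hball⟩ := Metric.mem_nhds_iff.1 (inter_mem (hU.mem_nhds ha) ht)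
  obtain ⟨hrU, hrt⟩ := subset_inter_iff.1 hball
  refine ContinuousAt.continuousWithinAt (tendsto_iff_norm_sub_tendsto_zero.2 ?_)
  refine squeeze_zero' (Eventually.of_forall fun x => norm_nonneg _)
    (eventually_of_mem (ball_mem_nhds a (half_pos hr)) fun x hx =>
      norm_fderiv_sub_fderiv_le_of_lipschitzOnWith (hf.mono hrU) (hC.mono hrt) hx) ?_
  have hcont : Continuous fun x => 2 * (C * ‖x - a‖) / (r / 2) := by fun_prop
  simpa using hcont.tendsto a

end HolomorphicC1

section Averages

lemma differentiableAt_intervalIntegral_comp_add {𝕜 E F : Type*} [RCLike 𝕜]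
    [NormedAddCommGroup E] [NormedSpace 𝕜 E] [NormedAddCommGroup F] [NormedSpace ℝ F]
    [NormedSpace 𝕜 F] {f : E → F} {V : Set E} (hV : IsOpen V) (hf : DifferentiableOn 𝕜 f V)
    (hf' : ContinuousOn (fderiv 𝕜 f) V) {γ : ℝ → E} (hγ : Continuous γ) {a : E} {α β : ℝ}
    (ha : ∀ t ∈ uIcc α β, a + γ t ∈ V) :
    DifferentiableAt 𝕜 (fun x => ∫ t in α..β, f (x + γ t)) a := by
  have hcurve : ContinuousOn (fun t => fderiv 𝕜 f (a + γ t)) (uIcc α β) :=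
    hf'.comp (by fun_prop) ha
  obtain ⟨M, hM⟩ := isCompact_uIcc.exists_bound_of_continuousOn hcurve
  have hnear : ∀ᶠ x in 𝓝 a, ∀ t ∈ uIcc α β, x + γ t ∈ V ∧ ‖fderiv 𝕜 f (x + γ t)‖ < M + 1 := by
    refine isCompact_uIcc.eventually_forall_of_forall_eventually fun t ht => ?_
    have hadd : Tendsto (fun p : E × ℝ => p.1 + γ p.2) (𝓝 (a, t)) (𝓝 (a + γ t)) :=
      Continuous.tendsto (by fun_prop) (a, t)
    have hnorm := (hf'.continuousAt (hV.mem_nhds (ha t ht))).norm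
    exact hadd.eventually ((hV.eventually_mem (ha t ht)).and
      (hnorm.eventually_lt continuousAt_const ((hM t ht).trans_lt (lt_add_one M))))
  have hint : ∀ᶠ x in 𝓝 a, ContinuousOn (fun t => f (x + γ t)) (uIcc α β) :=
    hnear.mono fun x hx => hf.continuousOn.comp (by fun_prop) fun t ht => (hx t ht).1
  refine (intervalIntegral.hasFDerivAt_integral_of_dominated_of_fderiv_le
    (F' := fun x t => fderiv 𝕜 f (x + γ t)) (bound := fun _ => M + 1) hnear
    (hint.mono fun x hx => (hx.mono uIoc_subset_uIcc).aestronglyMeasurable measurableSet_uIoc)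
    hint.self_of_nhds.intervalIntegrable
    ((hcurve.mono uIoc_subset_uIcc).aestronglyMeasurable measurableSet_uIoc)
    ?_ intervalIntegrable_const ?_).differentiableAt
  · exact Eventually.of_forall fun t ht x hx => (hx t (uIoc_subset_uIcc ht)).2.le
  · refine Eventually.of_forall fun t ht x hx => (hasFDerivAt_comp_add_right (γ t)).2 ?_
    exact (hf.differentiableAt (hV.mem_nhds (hx t (uIoc_subset_uIcc ht)).1)).hasFDerivAt

variable {E F : Type*} [NormedAddCommGroup E] [NormedSpace ℂ E]
  [NormedAddCommGroup F] [NormedSpace ℂ F]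

lemma differentiableAt_circleAverage_add_smul {f : E → F} {V : Set E} (hV : IsOpen V)
    (hf : DifferentiableOn ℂ f V) {a v : E} {r : ℝ} (ha : ∀ z ∈ sphere (0 : ℂ) |r|, a + z • v ∈ V) :
    DifferentiableAt ℂ (fun x => Real.circleAverage (fun z => f (x + z • v)) 0 r) a := by
  simp only [Real.circleAverage_def]
  exact (differentiableAt_intervalIntegral_comp_add hV hf
    (continuousOn_fderiv_of_differentiableOn hV hf) (γ := fun θ => circleMap 0 r θ • v)
    (by fun_prop) fun θ _ => ha _ (circleMap_mem_sphere' 0 r θ)).const_smul _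

lemma differentiableOn_of_differentiableAt_line [CompleteSpace F] {g : E → F} {U V : Set E}
    (hU : IsOpen U) (hV : IsOpen V) (v : E) (hg : DifferentiableOn ℂ g V)
    (hline : ∀ x ∈ U, DifferentiableAt ℂ (fun t : ℂ => g (x + t • v)) 0)
    (hUV : ∀ x ∈ U, ∀ᶠ t in 𝓝[≠] (0 : ℂ), x + t • v ∈ V) :
    DifferentiableOn ℂ g U := by
  intro a ha
  obtain ⟨ε, hε, hεV⟩ := eventually_nhds_iff_ball.1 (eventually_nhdsWithin_iff.1 (hUV a ha))
  have hmem : ∀ᶠ p in 𝓝 (a, (0 : ℂ)), p.1 + p.2 • v ∈ U :=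
    (hU.preimage (by fun_prop)).eventually_mem (by simpa using ha)
  obtain ⟨δ, hδ, hδU⟩ := eventually_nhds_iff_ball.1 hmem
  obtain ⟨r, hr, hrεδ⟩ := exists_between (lt_min hε hδ)
  obtain ⟨hrε, hrδ⟩ := lt_min_iff.1 hrεδ
  have hcircle : ∀ z ∈ sphere (0 : ℂ) |r|, a + z • v ∈ V := by
    intro z hz
    rw [abs_of_pos hr] at hz
    exact hεV z (closedBall_subset_ball hrε (sphere_subset_closedBall hz))
      (ne_of_mem_sphere hz hr.ne')
  refine ((differentiableAt_circleAverage_add_smul hV hg hcircle).congr_of_eventuallyEq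
    ?_).differentiableWithinAt
  filter_upwards [ball_mem_nhds a hδ] with x hx
  have hdisc : DifferentiableOn ℂ (fun t : ℂ => g (x + t • v)) (ball 0 δ) := by
    intro t ht
    have hxt : x + t • v ∈ U := hδU (x, t) (ball_prod_same a (0 : ℂ) δ ▸ ⟨hx, ht⟩)
    have htranslate : (fun s : ℂ => g (x + s • v)) = fun s => g (x + t • v + (s - t) • v) := by
      simp only [add_assoc, ← add_smul, add_sub_cancel]
    rw [htranslate]
    exact ((differentiableAt_comp_sub_const (f := fun s : ℂ => g (x + t • v + s • v))).2
      (by simpa using hline _ hxt)).differentiableWithinAt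
  have hdcl : DiffContOnCl ℂ (fun t : ℂ => g (x + t • v)) (ball 0 |r|) :=
    hdisc.diffContOnCl_ball (closedBall_subset_ball (by rwa [abs_of_pos hr]))
  simpa using hdcl.circleAverage.symm

end Averages

section Division

variable {E F : Type*} [NormedAddCommGroup E] [NormedSpace ℂ E]
  [NormedAddCommGroup F] [NormedSpace ℂ F] {U : Set E} {L : E →L[ℂ] ℂ} {v x : E} {f : E → F}

open Classical in
/-- The quotient of `f` by the linear functional `L`. On the hyperplane `ker L` it is the derivative
of `f` in the direction `v`; this is the limiting value when `L v = 1` and `f` vanishes there. -/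
noncomputable def linearQuotient (L : E →L[ℂ] ℂ) (v : E) (f : E → F) (x : E) : F :=
  if L x = 0 then lineDeriv ℂ f x v else (L x)⁻¹ • f x

lemma smul_linearQuotient (hker : L x = 0 → f x = 0) : L x • linearQuotient L v f x = f x := by
  by_cases hLx : L x = 0
  · simp [hLx, hker hLx]
  · simp [linearQuotient, hLx]

lemma linearQuotient_add_smul_eq_dslope (hv : L v = 1) (hLx : L x = 0) (hfx : f x = 0) (t : ℂ) :
    linearQuotient L v f (x + t • v) = dslope (fun s : ℂ => f (x + s • v)) 0 t := by
  obtain rfl | ht := eq_or_ne t 0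
  · simp [linearQuotient, hLx, lineDeriv]
  · simp [linearQuotient, hLx, hv, ht, dslope_of_ne, slope_def_module, hfx]

lemma differentiableOn_linearQuotient_inter_ne_zero (hf : DifferentiableOn ℂ f U) :
    DifferentiableOn ℂ (linearQuotient L v f) (U ∩ {x | L x ≠ 0}) :=
  ((L.differentiable.differentiableOn.inv fun _ hx => hx.2).smul
    (hf.mono inter_subset_left)).congr fun _ hx => if_neg hx.2

lemma eventually_add_smul_mem (hU : IsOpen U) (hx : x ∈ U) (v : E) :
    ∀ᶠ t in 𝓝 (0 : ℂ), x + t • v ∈ U :=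
  (hU.preimage (by fun_prop : Continuous fun t : ℂ => x + t • v)).eventually_mem (by simpa using hx)

lemma eventually_apply_add_smul_ne_zero (hv : L v = 1) (x : E) :
    ∀ᶠ t in 𝓝[≠] (0 : ℂ), L (x + t • v) ≠ 0 := by
  have hne : ∀ᶠ t in 𝓝[≠] (0 : ℂ), t ≠ -L x := by
    obtain h0 | h0 := eq_or_ne (0 : ℂ) (-L x)
    · exact h0 ▸ eventually_mem_nhdsWithin
    · exact eventually_ne_nhdsWithin h0
  filter_upwards [hne] with t ht
  simpa [hv, ← eq_neg_iff_add_eq_zero, add_comm (L x)] using ht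

variable [CompleteSpace F]

lemma differentiableAt_linearQuotient_line (hU : IsOpen U) (hv : L v = 1)
    (hf : DifferentiableOn ℂ f U) (hx : x ∈ U) (hker : L x = 0 → f x = 0) :
    DifferentiableAt ℂ (fun t : ℂ => linearQuotient L v f (x + t • v)) 0 := by
  by_cases hLx : L x = 0
  · have hmem : {t : ℂ | x + t • v ∈ U} ∈ 𝓝 0 := eventually_add_smul_mem hU hx v
    have hline : DifferentiableOn ℂ (fun t : ℂ => f (x + t • v)) {t | x + t • v ∈ U} :=
      hf.comp (by fun_prop) fun t ht => ht
    rw [funext (linearQuotient_add_smul_eq_dslope hv hLx (hker hLx))]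
    exact ((Complex.differentiableOn_dslope hmem).2 hline).differentiableAt hmem
  · have hopen : IsOpen (U ∩ {x | L x ≠ 0}) :=
      hU.inter (isOpen_ne_fun L.continuous continuous_const)
    have hquot : DifferentiableAt ℂ (linearQuotient L v f) (x + (0 : ℂ) • v) := by
      simpa using (differentiableOn_linearQuotient_inter_ne_zero hf).differentiableAt
        (hopen.mem_nhds ⟨hx, hLx⟩)
    exact hquot.comp 0 (f := fun t : ℂ => x + t • v) (by fun_prop)

lemma differentiableOn_linearQuotient (hU : IsOpen U) (hv : L v = 1) (hf : DifferentiableOn ℂ f U)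
    (hker : ∀ x ∈ U, L x = 0 → f x = 0) : DifferentiableOn ℂ (linearQuotient L v f) U :=
  differentiableOn_of_differentiableAt_line hU
    (hU.inter (isOpen_ne_fun L.continuous continuous_const)) v
    (differentiableOn_linearQuotient_inter_ne_zero hf)
    (fun x hx => differentiableAt_linearQuotient_line hU hv hf hx (hker x hx))
    fun x hx => ((eventually_add_smul_mem hU hx v).filter_mono nhdsWithin_le_nhds).and
      (eventually_apply_add_smul_ne_zero hv x)

lemma exists_differentiableOn_eq_smul_of_eq_zero_on_ker (hU : IsOpen U) (hL : L ≠ 0)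
    (hf : DifferentiableOn ℂ f U) (hker : ∀ x ∈ U, L x = 0 → f x = 0) :
    ∃ g : E → F, DifferentiableOn ℂ g U ∧ ∀ x ∈ U, f x = L x • g x := by
  obtain ⟨v, hv⟩ : ∃ v, L v = 1 :=
    LinearMap.surjective (f := L.toLinearMap) (by exact_mod_cast hL) 1
  exact ⟨linearQuotient L v f, differentiableOn_linearQuotient hU hv hf hker,
    fun x hx => (smul_linearQuotient (hker x hx)).symm⟩

end Division

section Density

variable {𝕜 M G ι : Type*} [NontriviallyNormedField 𝕜] [AddCommGroup M] [Module 𝕜 M]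
  [TopologicalSpace M] [ContinuousAdd M] [ContinuousSMul 𝕜 M] {S : Finset ι} {L : ι → M →L[𝕜] 𝕜}

lemma dense_setOf_prod_apply_ne_zero (hL : ∀ i ∈ S, L i ≠ 0) :
    Dense {x | ∏ i ∈ S, L i x ≠ 0} := by
  classical
  induction S using Finset.induction_on with
  | empty => simp
  | insert i S hi ih =>
    obtain ⟨hLi, hLS⟩ := (Finset.forall_mem_insert i S _).1 hL
    have hdense : Dense {x | L i x ≠ 0} :=
      (dense_compl_singleton 0).preimage ((L i).isOpenMap_of_ne_zero hLi)
    have hopen : IsOpen {x | L i x ≠ 0} := isOpen_ne_fun (L i).continuous continuous_const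
    simpa [Finset.prod_insert hi, ofPred_and] using hdense.inter_of_isOpen_left (ih hLS) hopen

lemma eqOn_zero_of_prod_apply_smul_eq_zero [AddCommGroup G] [Module 𝕜 G] [TopologicalSpace G]
    [T2Space G] (hL : ∀ i ∈ S, L i ≠ 0) {W : Set M} (hW : IsOpen W) {g : M → G}
    (hg : ContinuousOn g W) (hzero : ∀ x ∈ W, (∏ i ∈ S, L i x) • g x = 0) : EqOn g 0 W := by
  have hcompl : EqOn g 0 (W ∩ {x | ∏ i ∈ S, L i x ≠ 0}) :=
    fun x hx => (smul_eq_zero.1 (hzero x hx.1)).resolve_left hx.2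
  exact hcompl.of_subset_closure hg continuousOn_const inter_subset_left
    ((dense_setOf_prod_apply_ne_zero hL).open_subset_closure_inter hW)

end Density

section Arrangement

variable {E F ι : Type*} [NormedAddCommGroup E] [NormedSpace ℂ E]
  [NormedAddCommGroup F] [NormedSpace ℂ F] {U : Set E} {S : Finset ι} {L : ι → E →L[ℂ] ℂ}
  {f : E → F}

lemma eq_zero_on_ker_of_prod_apply_smul_eq_zero {T : E →L[ℂ] ℂ} (hU : IsOpen U)
    (hT : ∀ j ∈ S, ¬ T.ker ≤ (L j).ker) (hf : ContinuousOn f U)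
    (hzero : ∀ x ∈ U, T x = 0 → (∏ j ∈ S, L j x) • f x = 0) :
    ∀ x ∈ U, T x = 0 → f x = 0 := by
  let N : Submodule ℂ E := T.ker
  have hrestrict : ∀ j ∈ S, (L j).comp N.subtypeL ≠ 0 := fun j hj hLj =>
    hT j hj fun x hx => DFunLike.congr_fun hLj (⟨x, hx⟩ : N)
  have hN : EqOn (f ∘ N.subtypeL) 0 (N.subtypeL ⁻¹' U) :=
    eqOn_zero_of_prod_apply_smul_eq_zero hrestrict (hU.preimage N.subtypeL.continuous)
      (hf.comp N.subtypeL.continuous.continuousOn (mapsTo_preimage _ _))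
      fun x hx => hzero x hx x.2
  exact fun x hx hTx => hN (x := (⟨x, hTx⟩ : N)) hx

variable [CompleteSpace F]

lemma exists_differentiableOn_eq_prod_smul (hU : IsOpen U) (hL : ∀ i ∈ S, L i ≠ 0)
    (hker : (S : Set ι).Pairwise fun i j => ¬ (L i).ker ≤ (L j).ker) (hf : DifferentiableOn ℂ f U)
    (hvan : ∀ x ∈ U, ∀ i ∈ S, L i x = 0 → f x = 0) :
    ∃ g : E → F, DifferentiableOn ℂ g U ∧ ∀ x ∈ U, f x = (∏ i ∈ S, L i x) • g x := by
  classical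
  induction S using Finset.induction_on with
  | empty => exact ⟨f, hf, by simp⟩
  | insert i S hi ih =>
    have hiS : i ∈ insert i S := Finset.mem_insert_self i S
    have hS {j : ι} (hj : j ∈ S) : j ∈ insert i S := Finset.mem_insert_of_mem hj
    obtain ⟨h, hh, hfh⟩ := ih (fun j hj => hL j (hS hj)) (hker.mono fun j hj => hS hj)
      fun x hx j hj => hvan x hx j (hS hj)
    have hhker : ∀ x ∈ U, L i x = 0 → h x = 0 :=
      eq_zero_on_ker_of_prod_apply_smul_eq_zero hU
        (fun j hj => hker hiS (hS hj) (ne_of_mem_of_not_mem hj hi).symm) hh.continuousOn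
        fun x hx hLx => (hfh x hx).symm.trans (hvan x hx i hiS hLx)
    obtain ⟨g, hg, hhg⟩ := exists_differentiableOn_eq_smul_of_eq_zero_on_ker hU (hL i hiS) hh hhker
    refine ⟨g, hg, fun x hx => ?_⟩
    rw [hfh x hx, hhg x hx, smul_smul, Finset.prod_insert hi, mul_comm]

theorem exists_unique_holomorphic_quotient_general (hU : IsOpen U) (hL : ∀ i ∈ S, L i ≠ 0)
    (hker : (S : Set ι).Pairwise fun i j => ¬ (L i).ker ≤ (L j).ker) (hf : DifferentiableOn ℂ f U)
    (hvan : ∀ x ∈ U, ∀ i ∈ S, L i x = 0 → f x = 0) :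
    ∃ g : E → F, (DifferentiableOn ℂ g U ∧ ∀ x ∈ U, f x = (∏ i ∈ S, L i x) • g x) ∧
      ∀ g' : E → F, DifferentiableOn ℂ g' U →
        (∀ x ∈ U, f x = (∏ i ∈ S, L i x) • g' x) → EqOn g g' U := by
  obtain ⟨g, hg, hfg⟩ := exists_differentiableOn_eq_prod_smul hU hL hker hf hvan
  refine ⟨g, ⟨hg, hfg⟩, fun g' hg' hfg' x hx => sub_eq_zero.1 ?_⟩
  refine eqOn_zero_of_prod_apply_smul_eq_zero hL hU (hg.continuousOn.sub hg'.continuousOn)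
    (fun y hy => ?_) hx
  rw [Pi.sub_apply, smul_sub, ← hfg y hy, ← hfg' y hy, sub_self]

end Arrangement

section Vandermonde

variable {R ι : Type*} [Ring R] [TopologicalSpace R] [IsTopologicalRing R]

variable (R) in
/-- The coordinate difference `x ↦ x p.2 - x p.1` as a continuous linear functional. For
`p.1 < p.2` these are the linear factors of the Vandermonde polynomial. -/
def coordDiff (p : ι × ι) : (ι → R) →L[R] R :=
  .proj p.2 - .proj p.1

@[simp]
lemma coordDiff_apply (p : ι × ι) (x : ι → R) : coordDiff R p x = x p.2 - x p.1 := rfl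

lemma coordDiff_ne_zero [Nontrivial R] {p : ι × ι} (hp : p.1 ≠ p.2) : coordDiff R p ≠ 0 := by
  classical
  intro h
  simpa [hp] using DFunLike.congr_fun h (Pi.single p.2 1)

lemma not_ker_coordDiff_le_ker_coordDiff [Nontrivial R] [Preorder ι] {p q : ι × ι}
    (hp : p.1 < p.2) (hq : q.1 < q.2) (hpq : p ≠ q) :
    ¬ (coordDiff R p).ker ≤ (coordDiff R q).ker := by
  classical
  obtain ⟨m, hmq, hm1, hm2⟩ : ∃ m, (m = q.1 ∨ m = q.2) ∧ p.1 ≠ m ∧ p.2 ≠ m := by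
    by_contra! h
    by_cases h11 : p.1 = q.1
    · exact hpq (Prod.ext h11 (h q.2 (.inr rfl) (h11 ▸ hq.ne)))
    · have h21 : p.2 = q.1 := h q.1 (.inl rfl) h11
      have h12 : p.1 < q.2 := hp.trans (h21 ▸ hq)
      exact hq.ne (h21.symm.trans (h q.2 (.inr rfl) h12.ne))
  intro hle
  have hsingle : Pi.single m 1 ∈ (coordDiff R q).ker := hle (by simp [hm1, hm2])
  rcases hmq with rfl | rfl <;> simp [hq.ne, hq.ne'] at hsingle

end Vandermonde

/-- If `f` is holomorphic on an open `U ⊆ ℂ^ℓ` and vanishes whenever two coordinates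
coincide, then there is a holomorphic `g` on `U`, unique on `U`, with `f = g·Δ`. -/
theorem exists_unique_holomorphic_quotient (ℓ : ℕ) (U : Set (Fin ℓ → ℂ)) (hU : IsOpen U)
    (f : (Fin ℓ → ℂ) → ℂ) (hf : DifferentiableOn ℂ f U)
    (hvan : ∀ μ ∈ U, (∃ j k : Fin ℓ, j ≠ k ∧ μ j = μ k) → f μ = 0) :
    ∃ g : (Fin ℓ → ℂ) → ℂ,
      (DifferentiableOn ℂ g U ∧ ∀ μ ∈ U, f μ = g μ * vdet μ) ∧
      ∀ g' : (Fin ℓ → ℂ) → ℂ, DifferentiableOn ℂ g' U →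
        (∀ μ ∈ U, f μ = g' μ * vdet μ) → Set.EqOn g g' U := by
  simpa [vdet, mul_comm] using exists_unique_holomorphic_quotient_general hU
    (S := Finset.univ.filter fun p : Fin ℓ × Fin ℓ => p.1 < p.2) (L := coordDiff ℂ)
    (fun p hp => coordDiff_ne_zero (Finset.mem_filter.1 hp).2.ne)
    (fun p hp q hq => not_ker_coordDiff_le_ker_coordDiff (by simpa using hp) (by simpa using hq))
    hf fun μ hμ p hp h => hvan μ hμ
      ⟨p.2, p.1, (Finset.mem_filter.1 hp).2.ne', sub_eq_zero.1 h⟩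
end

section
/- Cramér's inequality: for all natural numbers k ≥ 0 and all real x, |H_k(√(2k) x)| ≤ (k!)^{1/2} 2^{k/2} e^{k x²}. -/
/-- The physicists' Hermite polynomials, `H_0 = 1`, `H_{k+1} = 2x H_k - H_k'`. -/
noncomputable def hermiteH : ℕ → Polynomial ℝ
  | 0 => 1
  | n + 1 => Polynomial.C 2 * Polynomial.X * hermiteH n - Polynomial.derivative (hermiteH n)

/-! The squared Hermite functions `d_n(x) = H_n(x)² e^{-x²} / (2ⁿ n!)` are the Taylor coefficients
of Mehler's kernel `M(z) = (1 - z²)^{-1/2} e^{-x² (1 - z) / (1 + z)}`, and Cramér's inequality says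
that `d_n ≤ 1`. On the unit disk `|M(z)| ≤ |1 - z²|^{-1/2}`, but Cauchy's estimate for `M` itself
only gives `d_n ≤ 1.18…`. Applied to `(ρ + z)⁴ M(z)` on `|z| = ρ`, as `ρ → 1`, it gives
`d_k + 4 d_{k+1} + 6 d_{k+2} + 4 d_{k+3} + d_{k+4} ≤ 224 / (9π) < 8`. At a maximum of `d_{k+2}`, on
the other hand, the vanishing derivative and the three-term recurrence express all five terms
through `d_{k+2}`, and show that the same sum is at least `8 d_{k+2}`. -/

open Filter MeasureTheory Metric Polynomial Real Topology
open scoped ComplexConjugate Nat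

section LaurentCoeff

variable {f : ℂ → ℂ} {R : ℝ}

/-- The `n`-th Laurent coefficient `(2πi)⁻¹ ∮ f(z) z^{-(n+1)} dz` of `f` at the origin, computed on
the circle of radius `R`. Indexing by `ℤ` gives the Taylor coefficients of a holomorphic function
together with the zeros at negative indices, so that recurrences need no boundary cases. -/
noncomputable def laurentCoeff (f : ℂ → ℂ) (R : ℝ) (n : ℤ) : ℂ :=
  (2 * π * Complex.I)⁻¹ * ∮ z in C(0, R), f z * z ^ (-(n + 1))

theorem continuousOn_mul_zpow_sphere (hR : 0 < R) (hf : ContinuousOn f (sphere 0 R)) (n : ℤ) :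
    ContinuousOn (fun z => f z * z ^ n) (sphere 0 R) :=
  hf.mul (continuousOn_id.zpow₀ n fun _ hz => Or.inl (ne_of_mem_sphere hz hR.ne'))

theorem laurentCoeff_sum_pow_mul {ι : Type*} (hR : 0 < R) (hf : ContinuousOn f (sphere 0 R))
    (s : Finset ι) (a : ι → ℂ) (e : ι → ℕ) (n : ℤ) :
    laurentCoeff (fun z => (∑ i ∈ s, a i * z ^ e i) * f z) R n =
      ∑ i ∈ s, a i * laurentCoeff f R (n - e i) := by
  have hint (i : ι) : CircleIntegrable (fun z => a i * (f z * z ^ (-(n - e i + 1)))) 0 R :=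
    (continuousOn_const.mul (continuousOn_mul_zpow_sphere hR hf _)).circleIntegrable hR.le
  have hexpand : Set.EqOn (fun z => (∑ i ∈ s, a i * z ^ e i) * f z * z ^ (-(n + 1)))
      (fun z => ∑ i ∈ s, a i * (f z * z ^ (-(n - e i + 1)))) (sphere 0 R) := fun z hz => by
    simp only [Finset.sum_mul]
    refine Finset.sum_congr rfl fun i _ => ?_
    rw [show -(n - (e i : ℤ) + 1) = e i + -(n + 1) by ring,
      zpow_add₀ (ne_of_mem_sphere hz hR.ne'), zpow_natCast]
    ring
  simp only [laurentCoeff]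
  rw [circleIntegral.integral_congr hR.le hexpand,
    circleIntegral.integral_fun_sum fun i _ => hint i, Finset.mul_sum]
  refine Finset.sum_congr rfl fun i _ => ?_
  rw [circleIntegral.integral_const_mul]
  ring

theorem laurentCoeff_deriv {f' : ℂ → ℂ} (hR : 0 < R)
    (hf : ∀ z ∈ sphere 0 R, HasDerivAt f (f' z) z) (hf' : ContinuousOn f' (sphere 0 R)) (n : ℤ) :
    laurentCoeff f' R n = (n + 1) * laurentCoeff f R (n + 1) := by
  have hzero : ∮ z in C(0, R),
      (f' z * z ^ (-(n + 1)) - (n + 1) * (f z * z ^ (-(n + 1 + 1)))) = 0 := by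
    refine circleIntegral.integral_eq_zero_of_hasDerivWithinAt'
      (f := fun z => f z * z ^ (-(n + 1))) fun z hz => ?_
    rw [abs_of_pos hR] at hz
    have hz0 : z ≠ 0 := ne_of_mem_sphere hz hR.ne'
    refine (((hf z hz).mul (hasDerivAt_zpow _ z (Or.inl hz0))).congr_deriv ?_).hasDerivWithinAt
    rw [show -(n + 1 + 1) = -(n + 1) - 1 by ring]
    push_cast
    ring
  have hcont : ContinuousOn f (sphere 0 R) := fun z hz => (hf z hz).continuousAt.continuousWithinAt
  have hint : CircleIntegrable (fun z => (n + 1) * (f z * z ^ (-(n + 1 + 1)))) 0 R :=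
    (continuousOn_const.mul (continuousOn_mul_zpow_sphere hR hcont _)).circleIntegrable hR.le
  rw [circleIntegral.integral_sub
      ((continuousOn_mul_zpow_sphere hR hf' _).circleIntegrable hR.le) hint,
    circleIntegral.integral_const_mul, sub_eq_zero] at hzero
  rw [laurentCoeff, laurentCoeff, hzero]
  ring

theorem laurentCoeff_zero (hR : 0 < R) (hf : DifferentiableOn ℂ f (closedBall 0 R)) :
    laurentCoeff f R 0 = f 0 := by
  have hcauchy := hf.circleIntegral_sub_inv_smul (mem_ball_self hR)
  simp only [sub_zero, smul_eq_mul] at hcauchy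
  simp only [laurentCoeff, zero_add, zpow_neg_one, mul_comm (f _)]
  rw [hcauchy, inv_mul_cancel_left₀ Complex.two_pi_I_ne_zero]

theorem laurentCoeff_of_neg (hR : 0 ≤ R) (hf : DifferentiableOn ℂ f (closedBall 0 R)) {n : ℤ}
    (hn : n < 0) : laurentCoeff f R n = 0 := by
  obtain ⟨m, hm⟩ := Int.eq_ofNat_of_zero_le (show 0 ≤ -(n + 1) by lia)
  have hdiff : DifferentiableOn ℂ (fun z => f z * z ^ m) (closedBall 0 R) := by fun_prop
  simp only [laurentCoeff, hm, zpow_natCast]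
  rw [(hdiff.mono closure_ball_subset_closedBall).diffContOnCl.circleIntegral_eq_zero hR, mul_zero]

theorem norm_laurentCoeff_le (f : ℂ → ℂ) (hR : 0 < R) (n : ℤ) :
    ‖laurentCoeff f R n‖ ≤ (2 * π)⁻¹ * R ^ (-n) * ∫ θ in 0..2 * π, ‖f (circleMap 0 R θ)‖ := by
  have hnorm (θ : ℝ) : ‖deriv (circleMap 0 R) θ • (f (circleMap 0 R θ) *
      circleMap 0 R θ ^ (-(n + 1)))‖ = R ^ (-n) * ‖f (circleMap 0 R θ)‖ := by
    rw [show -n = 1 + -(n + 1) by ring, zpow_add₀ hR.ne', zpow_one]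
    simp only [deriv_circleMap, smul_eq_mul, norm_mul, norm_circleMap_zero, Complex.norm_I,
      norm_zpow, abs_of_pos hR]
    ring
  have hle := intervalIntegral.norm_integral_le_integral_norm (μ := volume) two_pi_pos.le
    (f := fun θ => deriv (circleMap 0 R) θ • (f (circleMap 0 R θ) *
      circleMap 0 R θ ^ (-(n + 1))))
  simp only [hnorm, intervalIntegral.integral_const_mul] at hle
  have htwopi : ‖2 * (π : ℂ) * Complex.I‖ = 2 * π := by simp [abs_of_pos pi_pos]
  rw [laurentCoeff, norm_mul, norm_inv, htwopi, mul_assoc (2 * π)⁻¹]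
  exact mul_le_mul_of_nonneg_left hle (by positivity)

end LaurentCoeff

section HermiteDensity

theorem derivative_hermiteH_succ (n : ℕ) :
    derivative (hermiteH (n + 1)) = C (2 * ((n : ℝ) + 1)) * hermiteH n := by
  induction n with
  | zero => simp [hermiteH]
  | succ n ih =>
    rw [hermiteH, derivative_sub, ih, derivative_C_mul, derivative_mul, derivative_C_mul,
      derivative_X, ih]
    have hn : hermiteH (n + 1) = C 2 * X * hermiteH n - derivative (hermiteH n) := rfl
    simp only [C_mul, C_add, C_1, Nat.cast_add, Nat.cast_one]
    linear_combination -(C 2 * (C (n : ℝ) + 1)) * hn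

theorem eval_hermiteH_zero (x : ℝ) : (hermiteH 0).eval x = 1 := by simp [hermiteH]

theorem eval_hermiteH_one (x : ℝ) : (hermiteH 1).eval x = 2 * x := by simp [hermiteH]

theorem eval_hermiteH_add_two (n : ℕ) (x : ℝ) :
    (hermiteH (n + 2)).eval x =
      2 * x * (hermiteH (n + 1)).eval x - 2 * ((n : ℝ) + 1) * (hermiteH n).eval x := by
  rw [hermiteH, derivative_hermiteH_succ]
  simp

/-- `H_n(x)² e^{-x²} / (2ⁿ n!)`, the square of the `n`-th `L²`-normalized Hermite function times
`√π`. -/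
noncomputable def hermiteDensity (n : ℕ) (x : ℝ) : ℝ :=
  (hermiteH n).eval x ^ 2 * exp (-x ^ 2) / (2 ^ n * n !)

theorem hermiteDensity_nonneg (n : ℕ) (x : ℝ) : 0 ≤ hermiteDensity n x := by
  unfold hermiteDensity
  positivity

theorem continuous_hermiteDensity (n : ℕ) : Continuous (hermiteDensity n) := by
  unfold hermiteDensity
  fun_prop

theorem hermiteDensity_zero (x : ℝ) : hermiteDensity 0 x = exp (-x ^ 2) := by
  simp [hermiteDensity, eval_hermiteH_zero]

theorem hermiteDensity_one (x : ℝ) : hermiteDensity 1 x = 2 * x ^ 2 * exp (-x ^ 2) := by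
  rw [hermiteDensity, eval_hermiteH_one, Nat.factorial_one, Nat.cast_one]
  ring

theorem hermiteDensity_two (x : ℝ) :
    hermiteDensity 2 x = (2 * x ^ 2 - 1) ^ 2 / 2 * exp (-x ^ 2) := by
  rw [hermiteDensity, eval_hermiteH_add_two 0, eval_hermiteH_one, eval_hermiteH_zero,
    Nat.factorial_two, Nat.cast_zero, Nat.cast_two]
  ring

theorem hermiteDensity_add_three (n : ℕ) (x : ℝ) :
    ((n : ℝ) + 3) * hermiteDensity (n + 3) x =
      (n + 2 - 2 * x ^ 2) * (hermiteDensity (n + 1) x - hermiteDensity (n + 2) x)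
        + (n + 1) * hermiteDensity n x := by
  simp only [hermiteDensity, eval_hermiteH_add_two, Nat.factorial_succ]
  push_cast
  field_simp
  ring

theorem tendsto_eval_mul_exp_neg_sq_cocompact (P : ℝ[X]) :
    Tendsto (fun x => P.eval x * exp (-x ^ 2)) (cocompact ℝ) (𝓝 0) := by
  have hpow (i : ℕ) : Tendsto (fun x : ℝ => x ^ i * exp (-x ^ 2)) (cocompact ℝ) (𝓝 0) := by
    rw [tendsto_zero_iff_abs_tendsto_zero]
    refine (tendsto_rpow_abs_mul_exp_neg_mul_sq_cocompact one_pos i).congr fun x => ?_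
    simp [abs_mul]
  induction P using Polynomial.induction_on' with
  | add P Q hP hQ => simpa [add_mul] using hP.add hQ
  | monomial i a => simpa [mul_assoc] using (hpow i).const_mul a

theorem exists_forall_hermiteDensity_le (n : ℕ) :
    ∃ y, ∀ x, hermiteDensity n x ≤ hermiteDensity n y := by
  have hlim : Tendsto (hermiteDensity n) (cocompact ℝ) (𝓝 0) := by
    rw [← zero_div (2 ^ n * (n ! : ℝ))]
    exact ((tendsto_eval_mul_exp_neg_sq_cocompact (hermiteH n ^ 2)).div_const _).congr fun x => by
      rw [eval_pow, hermiteDensity]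
  by_cases hpos : ∃ x, 0 < hermiteDensity n x
  · obtain ⟨x, hx⟩ := hpos
    exact (continuous_hermiteDensity n).exists_forall_ge' x
      ((hlim.eventually (gt_mem_nhds hx)).mono fun _ => le_of_lt)
  · push Not at hpos
    exact ⟨0, fun x => (hpos x).trans (hermiteDensity_nonneg n 0)⟩

theorem hasDerivAt_hermiteDensity_succ (n : ℕ) (x : ℝ) :
    HasDerivAt (hermiteDensity (n + 1))
      (2 * (hermiteH (n + 1)).eval x * exp (-x ^ 2) / (2 ^ (n + 1) * (n + 1)!) *
        (2 * ((n : ℝ) + 1) * (hermiteH n).eval x - x * (hermiteH (n + 1)).eval x)) x := by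
  have hH := (hermiteH (n + 1)).hasDerivAt x
  rw [derivative_hermiteH_succ, eval_C_mul] at hH
  have hexp : HasDerivAt (fun x : ℝ => exp (-x ^ 2)) (exp (-x ^ 2) * (-(2 * x))) x := by
    simpa using (hasDerivAt_pow 2 x).neg.exp
  refine (((hH.fun_pow 2).mul hexp).div_const _).congr_deriv ?_
  push_cast
  ring

theorem eval_hermiteH_of_isLocalMax {n : ℕ} {y : ℝ} (hmax : IsLocalMax (hermiteDensity (n + 1)) y)
    (hy : (hermiteH (n + 1)).eval y ≠ 0) :
    2 * ((n : ℝ) + 1) * (hermiteH n).eval y = y * (hermiteH (n + 1)).eval y := by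
  have hcrit := hmax.hasDerivAt_eq_zero (hasDerivAt_hermiteDensity_succ n y)
  exact sub_eq_zero.1 ((mul_eq_zero.1 hcrit).resolve_left (by positivity))

-- At a maximum `y` of `d = hermiteDensity (k + 2)`, with `u = y ^ 2`, the four summands are
-- `C(4, j) * hermiteDensity (k + j) y / d y` for `j = 0, 1, 3, 4`.
theorem two_le_sum_neighbor_ratios {k u : ℝ} (hk : 0 ≤ k) :
    2 ≤ (u - (k + 2)) ^ 2 / ((k + 1) * (k + 2)) + 2 * u / (k + 2) + 2 * u / (k + 3)
      + (u - (k + 3)) ^ 2 / ((k + 3) * (k + 4)) := by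
  have hquad :
      0 ≤ (2 * k ^ 2 + 10 * k + 14) * u ^ 2 - (8 * k + 20) * u + 3 * (k + 2) * (k + 3) := by
    nlinarith [mul_nonneg hk (sq_nonneg (5 * u - 2)), mul_nonneg (sq_nonneg k) (sq_nonneg u),
      sq_nonneg (7 * u - 5), sq_nonneg k]
  rw [← sub_nonneg]
  refine (div_nonneg hquad (by positivity : 0 ≤ (k + 1) * (k + 2) * (k + 3) * (k + 4))).trans_eq ?_
  field_simp
  ring

theorem eight_mul_hermiteDensity_le {k : ℕ} {y : ℝ}
    (hcrit : 2 * ((k : ℝ) + 2) * (hermiteH (k + 1)).eval y = y * (hermiteH (k + 2)).eval y) :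
    8 * hermiteDensity (k + 2) y ≤
      ∑ j ∈ Finset.range 5, (Nat.choose 4 j : ℝ) * hermiteDensity (k + j) y := by
  set H := (hermiteH (k + 2)).eval y with hH
  have hH1 : (hermiteH (k + 1)).eval y = y * H / (2 * ((k : ℝ) + 2)) := by
    field_simp
    linarith
  have hH0 : (hermiteH k).eval y = (y ^ 2 - (k + 2)) * H / (2 * ((k : ℝ) + 1) * (k + 2)) := by
    have hrec := eval_hermiteH_add_two k y
    rw [← hH, hH1] at hrec
    field_simp at hrec ⊢
    linarith
  have hH3 : (hermiteH (k + 3)).eval y = y * H := by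
    have hrec := eval_hermiteH_add_two (k + 1) y
    push_cast at hrec
    linarith
  have hH4 : (hermiteH (k + 4)).eval y = 2 * (y ^ 2 - (k + 3)) * H := by
    rw [eval_hermiteH_add_two, hH3]
    push_cast
    ring
  have hsum : ∑ j ∈ Finset.range 5, (Nat.choose 4 j : ℝ) * hermiteDensity (k + j) y =
      ((y ^ 2 - (k + 2)) ^ 2 / (((k : ℝ) + 1) * (k + 2)) + 2 * y ^ 2 / (k + 2)
        + 2 * y ^ 2 / (k + 3) + (y ^ 2 - (k + 3)) ^ 2 / (((k : ℝ) + 3) * (k + 4)) + 6)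
        * hermiteDensity (k + 2) y := by
    simp only [Finset.sum_range_succ, Finset.sum_range_zero, Nat.choose, hermiteDensity, add_zero,
      hH0, hH1, hH3, hH4, ← hH, Nat.factorial_succ]
    push_cast
    field_simp
    ring
  rw [hsum]
  gcongr
  · exact hermiteDensity_nonneg _ _
  · linarith [two_le_sum_neighbor_ratios (k := k) (u := y ^ 2) k.cast_nonneg]

end HermiteDensity

section MehlerKernel

variable {R : ℝ} {z : ℂ}

/-- Mehler's kernel on the diagonal, `(1 - z²)^{-1/2} e^{-x² (1 - z) / (1 + z)}`: the generating
function `∑ hermiteDensity n x * zⁿ`, see `laurentCoeff_mehlerKernel`. -/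
noncomputable def mehlerKernel (x : ℝ) (z : ℂ) : ℂ :=
  (1 - z ^ 2) ^ (-1 / 2 : ℂ) * Complex.exp (-x ^ 2 * ((1 - z) / (1 + z)))

theorem one_sub_sq_mem_slitPlane (hz : ‖z‖ < 1) : 1 - z ^ 2 ∈ Complex.slitPlane := by
  rw [sub_eq_add_neg]
  apply Complex.mem_slitPlane_of_norm_lt_one
  rw [norm_neg, norm_pow]
  exact pow_lt_one₀ (norm_nonneg z) hz two_ne_zero

theorem one_add_ne_zero_of_norm_lt_one (hz : ‖z‖ < 1) : 1 + z ≠ 0 :=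
  Complex.slitPlane_ne_zero (Complex.mem_slitPlane_of_norm_lt_one hz)

theorem hasDerivAt_mehlerKernel (x : ℝ) (hz : ‖z‖ < 1) :
    HasDerivAt (mehlerKernel x)
      ((z / (1 - z ^ 2) + 2 * x ^ 2 / (1 + z) ^ 2) * mehlerKernel x z) z := by
  have hslit := one_sub_sq_mem_slitPlane hz
  have hsq : 1 - z ^ 2 ≠ 0 := Complex.slitPlane_ne_zero hslit
  have hadd := one_add_ne_zero_of_norm_lt_one hz
  have hpow : HasDerivAt (fun z : ℂ => (1 - z ^ 2) ^ (-1 / 2 : ℂ))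
      (z / (1 - z ^ 2) * (1 - z ^ 2) ^ (-1 / 2 : ℂ)) z := by
    refine (((hasDerivAt_pow 2 z).const_sub 1).cpow_const hslit).congr_deriv ?_
    rw [Complex.cpow_sub _ _ hsq, Complex.cpow_one]
    push_cast
    ring
  have hexp : HasDerivAt (fun z : ℂ => Complex.exp (-x ^ 2 * ((1 - z) / (1 + z))))
      (2 * x ^ 2 / (1 + z) ^ 2 * Complex.exp (-x ^ 2 * ((1 - z) / (1 + z)))) z := by
    refine (((((hasDerivAt_id z).const_sub 1).fun_div ((hasDerivAt_id z).const_add 1)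
      hadd).const_mul _).cexp).congr_deriv ?_
    simp only [id_eq]
    ring
  exact (hpow.mul hexp).congr_deriv (by rw [mehlerKernel]; ring)

-- The factor `(1 - z) (1 + z)²` clears the denominators of the logarithmic derivative, so that
-- comparing coefficients gives a recurrence with finitely many terms.
theorem hasDerivAt_cubic_mul_mehlerKernel (x : ℝ) (hz : ‖z‖ < 1) :
    HasDerivAt (fun z => (1 + z - z ^ 2 - z ^ 3) * mehlerKernel x z)
      ((1 + 2 * x ^ 2 - (1 + 2 * x ^ 2) * z - 2 * z ^ 2) * mehlerKernel x z) z := by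
  have hsq : 1 - z ^ 2 ≠ 0 := Complex.slitPlane_ne_zero (one_sub_sq_mem_slitPlane hz)
  have hadd := one_add_ne_zero_of_norm_lt_one hz
  have hpoly := (((hasDerivAt_id z).const_add 1).fun_sub (hasDerivAt_pow 2 z)).fun_sub
    (hasDerivAt_pow 3 z)
  refine (hpoly.mul (hasDerivAt_mehlerKernel x hz)).congr_deriv ?_
  have hlog : (1 + z - z ^ 2 - z ^ 3) * (z / (1 - z ^ 2) + 2 * x ^ 2 / (1 + z) ^ 2) =
      z * (1 + z) + 2 * x ^ 2 * (1 - z) := by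
    field_simp
    ring
  push_cast
  simp only [id_eq]
  linear_combination mehlerKernel x z * hlog

theorem differentiableOn_mehlerKernel (x : ℝ) (hR : R < 1) :
    DifferentiableOn ℂ (mehlerKernel x) (closedBall 0 R) := fun _ hz =>
  (hasDerivAt_mehlerKernel x ((mem_closedBall_zero_iff.1 hz).trans_lt
    hR)).differentiableAt.differentiableWithinAt

theorem continuousOn_mehlerKernel_sphere (x : ℝ) (hR : R < 1) :
    ContinuousOn (mehlerKernel x) (sphere 0 R) :=
  (differentiableOn_mehlerKernel x hR).continuousOn.mono sphere_subset_closedBall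

theorem laurentCoeff_mehlerKernel_add_one (x : ℝ) (hR : 0 < R) (hR1 : R < 1) (n : ℤ) :
    (n + 1) * laurentCoeff (mehlerKernel x) R (n + 1) =
      (n - 2 * x ^ 2) * (laurentCoeff (mehlerKernel x) R (n - 1)
        - laurentCoeff (mehlerKernel x) R n)
        + (n - 1) * laurentCoeff (mehlerKernel x) R (n - 2) := by
  have hcont := continuousOn_mehlerKernel_sphere x hR1
  set a := laurentCoeff (mehlerKernel x) R
  have hderiv := laurentCoeff_deriv hR (fun z hz => hasDerivAt_cubic_mul_mehlerKernel x
    ((mem_sphere_zero_iff_norm.1 hz).trans_lt hR1)) (by fun_prop) n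
  have hleft : laurentCoeff (fun z => (1 + 2 * x ^ 2 - (1 + 2 * x ^ 2) * z - 2 * z ^ 2)
      * mehlerKernel x z) R n =
      (1 + 2 * x ^ 2) * a n - (1 + 2 * x ^ 2) * a (n - 1) - 2 * a (n - 2) := by
    simpa [Fin.sum_univ_three, sub_eq_add_neg] using laurentCoeff_sum_pow_mul hR hcont
      Finset.univ ![1 + 2 * (x : ℂ) ^ 2, -(1 + 2 * (x : ℂ) ^ 2), -2] Fin.val n
  have hright : laurentCoeff (fun z => (1 + z - z ^ 2 - z ^ 3) * mehlerKernel x z) R (n + 1) =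
      a (n + 1) + a n - a (n - 1) - a (n - 2) := by
    rw [show n - 1 = n + 1 - 2 by ring, show n - 2 = n + 1 - 3 by ring]
    simpa [Fin.sum_univ_four, sub_eq_add_neg] using
      laurentCoeff_sum_pow_mul hR hcont Finset.univ ![1, 1, -1, -1] Fin.val (n + 1)
  rw [hleft, hright] at hderiv
  linear_combination -hderiv

theorem laurentCoeff_mehlerKernel (x : ℝ) (hR : 0 < R) (hR1 : R < 1) :
    ∀ n : ℕ, laurentCoeff (mehlerKernel x) R n = hermiteDensity n x := by
  have hdiff := differentiableOn_mehlerKernel x hR1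
  have hrec := laurentCoeff_mehlerKernel_add_one x hR hR1
  have hneg {n : ℤ} (hn : n < 0) := laurentCoeff_of_neg hR.le hdiff hn
  have h0 : laurentCoeff (mehlerKernel x) R 0 = hermiteDensity 0 x := by
    rw [laurentCoeff_zero hR hdiff, hermiteDensity_zero]
    simp [mehlerKernel]
  have h1 : laurentCoeff (mehlerKernel x) R 1 = hermiteDensity 1 x := by
    have h : laurentCoeff (mehlerKernel x) R 1 = 2 * x ^ 2 * hermiteDensity 0 x := by
      simpa [hneg, h0] using hrec 0
    rw [h, hermiteDensity_zero, hermiteDensity_one]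
    push_cast
    ring
  have h2 : laurentCoeff (mehlerKernel x) R 2 = hermiteDensity 2 x := by
    have h : 2 * laurentCoeff (mehlerKernel x) R 2 =
        (1 - 2 * x ^ 2) * (hermiteDensity 0 x - hermiteDensity 1 x) := by
      simpa [hneg, h0, h1, one_add_one_eq_two] using hrec 1
    rw [hermiteDensity_zero, hermiteDensity_one] at h
    rw [hermiteDensity_two]
    push_cast at h ⊢
    linear_combination h / 2
  intro n
  induction n using Nat.strong_induction_on with
  | _ n ih =>
    match n with
    | 0 => exact h0
    | 1 => exact h1
    | 2 => exact h2
    | k + 3 =>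
      have h := hrec (k + 2)
      have hd := congrArg (Complex.ofReal) (hermiteDensity_add_three k x)
      have hk := ih k (by lia)
      have hk1 := ih (k + 1) (by lia)
      have hk2 := ih (k + 2) (by lia)
      push_cast at h hd hk1 hk2 ⊢
      rw [show (k : ℤ) + 2 + 1 = k + 3 by ring, show (k : ℤ) + 2 - 1 = k + 1 by ring,
        show (k : ℤ) + 2 - 2 = k by ring, hk, hk1, hk2] at h
      refine mul_left_cancel₀ (a := (k : ℂ) + 3) (by norm_cast) ?_
      linear_combination h - hd

theorem re_one_sub_div_one_add_nonneg (hz : ‖z‖ < 1) : 0 ≤ ((1 - z) / (1 + z)).re := by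
  have hsq : ‖z‖ ^ 2 < 1 := pow_lt_one₀ (norm_nonneg z) hz two_ne_zero
  rw [Complex.sq_norm, Complex.normSq_apply] at hsq
  rw [Complex.div_re, ← add_div]
  refine div_nonneg ?_ (Complex.normSq_nonneg _)
  simp only [Complex.sub_re, Complex.add_re, Complex.sub_im, Complex.add_im, Complex.one_re,
    Complex.one_im]
  linarith

theorem norm_mehlerKernel_le (x : ℝ) (hz : ‖z‖ < 1) :
    ‖mehlerKernel x z‖ ≤ (√‖1 - z ^ 2‖)⁻¹ := by
  have hpow : ‖(1 - z ^ 2) ^ (-1 / 2 : ℂ)‖ = (√‖1 - z ^ 2‖)⁻¹ := by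
    rw [show (-1 / 2 : ℂ) = ((-(1 / 2) : ℝ) : ℂ) by push_cast; ring, Complex.norm_cpow_real,
      rpow_neg (norm_nonneg _), sqrt_eq_rpow]
  have hexp : ‖Complex.exp (-x ^ 2 * ((1 - z) / (1 + z)))‖ ≤ 1 := by
    rw [Complex.norm_exp, exp_le_one_iff, ← Complex.ofReal_pow, ← Complex.ofReal_neg,
      Complex.re_ofReal_mul]
    exact mul_nonpos_of_nonpos_of_nonneg (neg_nonpos.2 (sq_nonneg x))
      (re_one_sub_div_one_add_nonneg hz)
  rw [mehlerKernel, norm_mul, hpow]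
  exact mul_le_of_le_one_right (by positivity) hexp

end MehlerKernel

section MehlerMajorant

variable {ρ θ : ℝ}

/-- The bound for `‖(ρ + z)⁴ * mehlerKernel x z‖` at `z = ρ e^{iθ}` given by
`norm_mehlerKernel_le`. -/
noncomputable def mehlerMajorant (ρ θ : ℝ) : ℝ :=
  ‖ρ + circleMap 0 ρ θ‖ ^ 4 * (√‖1 - circleMap 0 ρ θ ^ 2‖)⁻¹

theorem norm_circleMap_zero_lt_one (hρ : 0 < ρ) (hρ1 : ρ < 1) (θ : ℝ) :
    ‖circleMap 0 ρ θ‖ < 1 := by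
  rwa [norm_circleMap_zero, abs_of_pos hρ]

theorem continuous_mehlerMajorant (hρ : 0 < ρ) (hρ1 : ρ < 1) :
    Continuous (mehlerMajorant ρ) := by
  have hne (θ : ℝ) : √‖1 - circleMap 0 ρ θ ^ 2‖ ≠ 0 :=
    (sqrt_pos.2 (norm_pos_iff.2 (Complex.slitPlane_ne_zero
      (one_sub_sq_mem_slitPlane (norm_circleMap_zero_lt_one hρ hρ1 θ))))).ne'
  unfold mehlerMajorant
  fun_prop (disch := exact hne _)

theorem circleMap_two_pi_sub (ρ θ : ℝ) :
    circleMap 0 ρ (2 * π - θ) = conj (circleMap 0 ρ θ) := by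
  rw [sub_eq_neg_add, periodic_circleMap 0 ρ]
  simp [circleMap, ← Complex.exp_conj]

theorem mehlerMajorant_two_pi_sub (ρ θ : ℝ) :
    mehlerMajorant ρ (2 * π - θ) = mehlerMajorant ρ θ := by
  have hadd : (ρ : ℂ) + conj (circleMap 0 ρ θ) = conj (ρ + circleMap 0 ρ θ) := by simp
  have hsub : 1 - conj (circleMap 0 ρ θ) ^ 2 = conj (1 - circleMap 0 ρ θ ^ 2) := by simp
  rw [mehlerMajorant, circleMap_two_pi_sub, hadd, hsub, Complex.norm_conj, Complex.norm_conj,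
    mehlerMajorant]

theorem two_mul_abs_im_le_norm_one_sub_sq (z : ℂ) : 2 * |z.im| ≤ ‖1 - z ^ 2‖ := by
  refine (pow_le_pow_iff_left₀ (by positivity) (norm_nonneg _) two_ne_zero).1 ?_
  rw [mul_pow, sq_abs, Complex.sq_norm, Complex.normSq_apply]
  simp only [pow_two, Complex.sub_re, Complex.sub_im, Complex.mul_re, Complex.mul_im,
    Complex.one_re, Complex.one_im]
  linarith [sq_nonneg (1 - z.re ^ 2 - z.im ^ 2)]

theorem norm_add_circleMap_sq (ρ θ : ℝ) :
    ‖ρ + circleMap 0 ρ θ‖ ^ 2 = (2 * ρ * cos (θ / 2)) ^ 2 := by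
  have hcos : cos θ = 2 * cos (θ / 2) ^ 2 - 1 := by rw [← cos_two_mul]; ring_nf
  rw [Complex.sq_norm, Complex.normSq_apply]
  simp only [circleMap_zero, Complex.add_re, Complex.add_im, Complex.ofReal_re, Complex.ofReal_im,
    Complex.re_ofReal_mul, Complex.im_ofReal_mul, Complex.exp_ofReal_mul_I_re,
    Complex.exp_ofReal_mul_I_im]
  linear_combination ρ ^ 2 * sin_sq_add_cos_sq θ + 2 * ρ ^ 2 * hcos

theorem sqrt_cos_le (hcos : 0 ≤ cos θ) : √(cos θ) ≤ 1 - sin θ ^ 2 / 4 := by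
  rw [sin_sq]
  nlinarith [sq_nonneg (√(cos θ) - 1), sq_sqrt hcos, sq_nonneg (cos θ - 1)]

theorem sin_half_pos (hθ : θ ∈ Set.Ioo 0 π) : 0 < sin (θ / 2) :=
  sin_pos_of_pos_of_lt_pi (by linarith [hθ.1]) (by linarith [hθ.2, pi_pos])

theorem mehlerMajorant_le (hρ : 0 < ρ) (hθ : θ ∈ Set.Ioo 0 π) :
    mehlerMajorant ρ θ ≤ 8 * ρ ^ 4 / √ρ *
      ((1 - sin (θ / 2) ^ 2) * (1 - sin (θ / 2) ^ 2 / 4) * cos (θ / 2) / √(sin (θ / 2))) := by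
  have hs : 0 < sin (θ / 2) := sin_half_pos hθ
  have hc : 0 < cos (θ / 2) := cos_pos_of_mem_Ioo ⟨by linarith [hθ.1, pi_pos], by linarith [hθ.2]⟩
  set s := sin (θ / 2)
  set c := cos (θ / 2)
  have hnum : ‖ρ + circleMap 0 ρ θ‖ ^ 4 = 16 * ρ ^ 4 * c ^ 4 := by
    linear_combination (‖ρ + circleMap 0 ρ θ‖ ^ 2 + (2 * ρ * c) ^ 2) * norm_add_circleMap_sq ρ θ
  have hden : 2 * (√ρ * √s * √c) ≤ √‖1 - circleMap 0 ρ θ ^ 2‖ := by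
    have him : (circleMap 0 ρ θ).im = 2 * (ρ * s * c) := by
      rw [circleMap_zero, Complex.im_ofReal_mul, Complex.exp_ofReal_mul_I_im,
        show θ = 2 * (θ / 2) by ring, sin_two_mul]
      ring
    have him_le := two_mul_abs_im_le_norm_one_sub_sq (circleMap 0 ρ θ)
    rw [him, abs_of_pos (by positivity)] at him_le
    refine le_sqrt_of_sq_le (le_of_eq_of_le ?_ him_le)
    rw [mul_pow, mul_pow, mul_pow, sq_sqrt hρ.le, sq_sqrt hs.le, sq_sqrt hc.le]
    ring
  -- Bounding `√c` by a polynomial in `s` makes the integrand elementary.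
  calc mehlerMajorant ρ θ ≤ 16 * ρ ^ 4 * c ^ 4 * (2 * (√ρ * √s * √c))⁻¹ := by
        rw [mehlerMajorant, hnum]
        gcongr
    _ = 8 * ρ ^ 4 / √ρ * (c ^ 2 * √c * c / √s) := by
        field_simp
        rw [sq_sqrt hc.le]
        ring
    _ ≤ _ := by
        rw [cos_sq']
        gcongr
        · exact sub_nonneg.2 (sin_sq_le_one _)
        · exact sqrt_cos_le hc.le

-- Substituting `s = sin (θ / 2)` turns the majorant of `mehlerMajorant_le` into
-- `2 (1 - s²) (1 - s² / 4) s^{-1/2} ds`, which integrates to `s^{1/2} (4 - s² + s⁴ / 9)`.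
theorem hasDerivAt_sqrt_sin_half (hθ : θ ∈ Set.Ioo 0 π) :
    HasDerivAt (fun θ => √(sin (θ / 2)) * (4 - sin (θ / 2) ^ 2 + sin (θ / 2) ^ 4 / 9))
      ((1 - sin (θ / 2) ^ 2) * (1 - sin (θ / 2) ^ 2 / 4) * cos (θ / 2) / √(sin (θ / 2))) θ := by
  have hs : 0 < sin (θ / 2) := sin_half_pos hθ
  have hsin : HasDerivAt (fun θ => sin (θ / 2)) (cos (θ / 2) * (1 / 2)) θ :=
    ((hasDerivAt_id θ).div_const 2).sin
  refine ((hsin.sqrt hs.ne').mul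
    (((hsin.fun_pow 2).const_sub 4).fun_add ((hsin.fun_pow 4).div_const 9))).congr_deriv ?_
  push_cast
  field_simp
  rw [sq_sqrt hs.le]
  ring

theorem integral_mehlerMajorant_zero_pi_le (hρ : 0 < ρ) (hρ1 : ρ < 1) :
    ∫ θ in 0..π, mehlerMajorant ρ θ ≤ 224 / 9 * (ρ ^ 4 / √ρ) := by
  have hcont := continuous_mehlerMajorant hρ hρ1
  refine (intervalIntegral.integral_le_sub_of_hasDeriv_right_of_le pi_pos.le
    (Continuous.continuousOn (by fun_prop))
    (fun θ hθ => ((hasDerivAt_sqrt_sin_half hθ).const_mul (8 * ρ ^ 4 / √ρ)).hasDerivWithinAt)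
    hcont.continuousOn.integrableOn_Icc fun θ hθ => mehlerMajorant_le hρ hθ).trans_eq ?_
  rw [sin_pi_div_two, zero_div, sin_zero, sqrt_one, sqrt_zero]
  ring

theorem integral_mehlerMajorant_le (hρ : 0 < ρ) (hρ1 : ρ < 1) :
    ∫ θ in 0..2 * π, mehlerMajorant ρ θ ≤ 448 / 9 * (ρ ^ 4 / √ρ) := by
  have hint (a b : ℝ) : IntervalIntegrable (mehlerMajorant ρ) volume a b :=
    (continuous_mehlerMajorant hρ hρ1).intervalIntegrable a b
  have hsymm : ∫ θ in π..2 * π, mehlerMajorant ρ θ = ∫ θ in 0..π, mehlerMajorant ρ θ := by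
    have h := intervalIntegral.integral_comp_sub_left (a := 0) (b := π) (mehlerMajorant ρ) (2 * π)
    simp only [mehlerMajorant_two_pi_sub] at h
    rw [h]
    congr 1 <;> ring
  rw [← intervalIntegral.integral_add_adjacent_intervals (hint 0 π) (hint π (2 * π)), hsymm]
  linarith [integral_mehlerMajorant_zero_pi_le hρ hρ1]

theorem integral_norm_add_pow_four_mul_mehlerKernel_le (x : ℝ) (hρ : 0 < ρ) (hρ1 : ρ < 1) :
    ∫ θ in 0..2 * π, ‖(ρ + circleMap 0 ρ θ) ^ 4 * mehlerKernel x (circleMap 0 ρ θ)‖ ≤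
      448 / 9 * (ρ ^ 4 / √ρ) := by
  have hkernel : Continuous fun θ => mehlerKernel x (circleMap 0 ρ θ) :=
    (continuousOn_mehlerKernel_sphere x hρ1).comp_continuous (continuous_circleMap 0 ρ)
      (circleMap_mem_sphere 0 hρ.le)
  refine (intervalIntegral.integral_mono_on two_pi_pos.le
    (Continuous.intervalIntegrable (by fun_prop) _ _)
    ((continuous_mehlerMajorant hρ hρ1).intervalIntegrable _ _) fun θ _ => ?_).trans
    (integral_mehlerMajorant_le hρ hρ1)
  rw [norm_mul, norm_pow, mehlerMajorant]
  exact mul_le_mul_of_nonneg_left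
    (norm_mehlerKernel_le x (norm_circleMap_zero_lt_one hρ hρ1 θ)) (by positivity)

theorem laurentCoeff_add_pow_mul_mehlerKernel (x : ℝ) (hρ : 0 < ρ) (hρ1 : ρ < 1) (m k : ℕ) :
    laurentCoeff (fun z => (ρ + z) ^ m * mehlerKernel x z) ρ (k + m) =
      (∑ j ∈ Finset.range (m + 1), m.choose j * ρ ^ j * hermiteDensity (k + j) x : ℝ) := by
  have hbinom (z : ℂ) : (ρ + z) ^ m =
      ∑ j ∈ Finset.range (m + 1), (m.choose j * ρ ^ j : ℂ) * z ^ (m - j) := by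
    rw [add_pow]
    exact Finset.sum_congr rfl fun j _ => by ring
  simp only [hbinom]
  rw [laurentCoeff_sum_pow_mul hρ (continuousOn_mehlerKernel_sphere x hρ1)]
  push_cast
  refine Finset.sum_congr rfl fun j hj => ?_
  have hindex : (k : ℤ) + m - (m - j : ℕ) = (k + j : ℕ) := by
    have := Finset.mem_range_succ_iff.1 hj
    lia
  rw [hindex, laurentCoeff_mehlerKernel x hρ hρ1]

theorem weighted_sum_hermiteDensity_le (k : ℕ) (x : ℝ) (hρ : 0 < ρ) (hρ1 : ρ < 1) :
    (∑ j ∈ Finset.range 5, (Nat.choose 4 j : ℝ) * ρ ^ j * hermiteDensity (k + j) x)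
      * (ρ ^ k * √ρ) ≤ 224 / (9 * π) := by
  have hcauchy := norm_laurentCoeff_le (fun z => (ρ + z) ^ 4 * mehlerKernel x z) hρ (k + (4 : ℕ))
  rw [laurentCoeff_add_pow_mul_mehlerKernel x hρ hρ1, Complex.norm_real, Nat.cast_ofNat] at hcauchy
  have hpow : ρ ^ (-((k : ℤ) + 4)) * ρ ^ 4 * ρ ^ k = 1 := by
    rw [zpow_neg, mul_assoc, ← pow_add, add_comm 4 k]
    exact inv_mul_cancel₀ (by positivity)
  have hsqrt : √ρ ≠ 0 := (sqrt_pos.2 hρ).ne'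
  calc _ ≤ (2 * π)⁻¹ * ρ ^ (-((k : ℤ) + 4)) * (448 / 9 * (ρ ^ 4 / √ρ)) * (ρ ^ k * √ρ) := by
        gcongr
        exact (le_norm_self _).trans (hcauchy.trans (mul_le_mul_of_nonneg_left
          (integral_norm_add_pow_four_mul_mehlerKernel_le x hρ hρ1) (by positivity)))
    _ = 224 / (9 * π) := by
        field_simp
        linear_combination 448 * hpow

theorem sum_hermiteDensity_le (k : ℕ) (x : ℝ) :
    ∑ j ∈ Finset.range 5, (Nat.choose 4 j : ℝ) * hermiteDensity (k + j) x ≤ 224 / (9 * π) := by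
  set S : ℝ → ℝ := fun ρ =>
    (∑ j ∈ Finset.range 5, (Nat.choose 4 j : ℝ) * ρ ^ j * hermiteDensity (k + j) x)
      * (ρ ^ k * √ρ) with hS
  have hlim : Tendsto S (𝓝[<] 1) (𝓝 (S 1)) :=
    (show Continuous S by fun_prop).continuousWithinAt
  have hle : ∀ᶠ ρ in 𝓝[<] 1, S ρ ≤ 224 / (9 * π) :=
    eventually_of_mem (Ioo_mem_nhdsLT zero_lt_one) fun ρ hρ =>
      weighted_sum_hermiteDensity_le k x hρ.1 hρ.2
  simpa [hS] using le_of_tendsto hlim hle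

end MehlerMajorant

theorem hermiteDensity_le_one (n : ℕ) (x : ℝ) : hermiteDensity n x ≤ 1 := by
  match n with
  | 0 =>
    rw [hermiteDensity_zero, exp_le_one_iff]
    exact neg_nonpos.2 (sq_nonneg x)
  | 1 =>
    rw [hermiteDensity_one, exp_neg, ← div_eq_mul_inv, div_le_one (exp_pos _)]
    have h := quadratic_le_exp_of_nonneg (sq_nonneg x)
    nlinarith [sq_nonneg (x ^ 2 - 1)]
  | k + 2 =>
    obtain ⟨y, hmax⟩ := exists_forall_hermiteDensity_le (k + 2)
    refine (hmax x).trans ?_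
    by_cases hy : (hermiteH (k + 2)).eval y = 0
    · simp [hermiteDensity, hy]
    · have hcrit := eval_hermiteH_of_isLocalMax (Eventually.of_forall hmax) hy
      push_cast at hcrit
      rw [add_assoc, one_add_one_eq_two] at hcrit
      have hconst : 224 / (9 * π) ≤ 8 := by
        rw [div_le_iff₀ (by positivity)]
        linarith [pi_gt_d6]
      linarith [eight_mul_hermiteDensity_le hcrit, sum_hermiteDensity_le k y]

theorem abs_eval_hermiteH_le (n : ℕ) (y : ℝ) :
    |(hermiteH n).eval y| ≤ √(n !) * 2 ^ ((n : ℝ) / 2) * exp (y ^ 2 / 2) := by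
  refine abs_le_of_sq_le_sq ?_ (by positivity)
  have hle := hermiteDensity_le_one n y
  rw [hermiteDensity, div_le_one (by positivity), exp_neg, mul_inv_le_iff₀ (exp_pos _)] at hle
  have htwo : ((2 : ℝ) ^ ((n : ℝ) / 2)) ^ 2 = 2 ^ n := by
    rw [← rpow_natCast, ← rpow_mul zero_le_two, Nat.cast_two, div_mul_cancel₀ _ two_ne_zero,
      rpow_natCast]
  have hexp : exp (y ^ 2 / 2) ^ 2 = exp (y ^ 2) := by
    rw [← exp_nat_mul, Nat.cast_two, mul_div_cancel₀ _ two_ne_zero]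
  rw [mul_pow, mul_pow, sq_sqrt (Nat.cast_nonneg _), htwo, hexp]
  linarith

/-- Cramér's inequality: `|H_k(√(2k) x)| ≤ √(k!) 2^{k/2} e^{k x²}`. -/
theorem cramer_inequality (k : ℕ) (x : ℝ) :
    |(hermiteH k).eval (Real.sqrt (2 * k) * x)| ≤
      Real.sqrt (Nat.factorial k) * (2 : ℝ) ^ ((k : ℝ) / 2) * Real.exp (k * x ^ 2) := by
  have hexponent : (√(2 * k) * x) ^ 2 / 2 = k * x ^ 2 := by
    rw [mul_pow, sq_sqrt (by positivity)]
    ring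
  rw [← hexponent]
  exact abs_eval_hermiteH_le k _
end
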